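/- arXiv:2303.03970 — 10 statements merged into one kernel-verified Lean document; each statement's English description precedes it below -/
import Mathlib

section
/- The lattice of normal subobjects of any preordered group is modular: for any preordered group (G, P_G) and normal subgroups A, B, C of G with C ⊆ A, one has A ∩ (B·C) = (A ∩ B)·C and (A ∩ (B·C)) ∩ P_G = ((A ∩ B)·C) ∩ P_G, i.e. the normal subobjects (A ∩ (B·C), A ∩ (B·C) ∩ P_G) and ((A ∩ B)·C, ((A ∩ B)·C) ∩ P_G) coincide. -/
/-- The lattice of normal subobjects of a preordered group is modular:
for normal subgroups `A`, `B`, `C` of `G` with `C ⊆ A`, one has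
`A ∩ (B·C) = (A ∩ B)·C`, together with the corresponding equality of the
intersections with the positive cone `P`. -/
theorem stmt2 {G : Type*} [Group G]
    (P : Submonoid G) (hP : ∀ g : G, ∀ p ∈ P, g * p * g⁻¹ ∈ P)
    (A B C : Subgroup G) (hA : A.Normal) (hB : B.Normal) (hC : C.Normal)
    (hCA : C ≤ A) :
    (A : Set G) ∩ {x | ∃ b ∈ B, ∃ c ∈ C, x = b * c} =
        {x | ∃ d, (d ∈ A ∧ d ∈ B) ∧ ∃ c ∈ C, x = d * c} ∧
      ((A : Set G) ∩ {x | ∃ b ∈ B, ∃ c ∈ C, x = b * c}) ∩ (P : Set G) =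
        {x | ∃ d, (d ∈ A ∧ d ∈ B) ∧ ∃ c ∈ C, x = d * c} ∩ (P : Set G) := by
  have h : (A : Set G) ∩ {x | ∃ b ∈ B, ∃ c ∈ C, x = b * c} =
        {x | ∃ d, (d ∈ A ∧ d ∈ B) ∧ ∃ c ∈ C, x = d * c} := by
    ext x
    constructor
    · rintro ⟨hx, b, hb, c, hc, rfl⟩
      exact ⟨b, ⟨(A.mul_mem_cancel_right (hCA hc)).1 hx, hb⟩, c, hc, rfl⟩
    · rintro ⟨d, ⟨hdA, hdB⟩, c, hc, rfl⟩
      exact ⟨A.mul_mem hdA (hCA hc), d, hdB, c, hc, rfl⟩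
  exact ⟨h, by rw [h]⟩
end

section
/- Let (G, P_G) be a preordered group, A an abelian group, Q ⊆ A a submonoid, and φ : A → G/[G,G] a surjective group homomorphism with φ(Q) = η_G(P_G). Let P' = {(g,a) ∈ G × A : η_G(g) = φ(a)} be the pullback group, with second projection π₂ : P' → A. Then the commutator subgroup [P',P'] equals Ker(π₂) = {(c,1) : c ∈ [G,G]}; consequently π₂ induces a group isomorphism P'/[P',P'] ≅ A which carries the image in P'/[P',P'] of the cone P'⁺ = {(p,q) : p ∈ P_G, q ∈ Q, η_G(p) = φ(q)} onto Q. (This is the admissibility of the reflection of preordered groups onto preordered abelian groups, applied to this pullback.) -/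
/-- The pullback of two group homomorphisms `φ : G →* K` and `ψ : A →* K`,
as a subgroup of `G × A`. -/
def pullbackSubgroup {G A K : Type*} [Group G] [Group A] [Group K]
    (φ : G →* K) (ψ : A →* K) : Subgroup (G × A) where
  carrier := {x | φ x.1 = ψ x.2}
  one_mem' := by simp
  mul_mem' := by
    intro a b ha hb
    simp only [Set.mem_setOf_eq, Prod.fst_mul, Prod.snd_mul, map_mul] at *
    rw [ha, hb]
  inv_mem' := by
    intro a ha
    simp only [Set.mem_setOf_eq, Prod.fst_inv, Prod.snd_inv, map_inv] at *
    rw [ha]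

/-- The positive cone of a subgroup `S ≤ G × A` induced by positive cones
`P ⊆ G` and `Q ⊆ A`: the submonoid of elements of `S` whose two components
are positive. -/
def subCone {G A : Type*} [Group G] [Group A] (S : Subgroup (G × A))
    (P : Submonoid G) (Q : Submonoid A) : Submonoid S where
  carrier := {x | (x : G × A).1 ∈ P ∧ (x : G × A).2 ∈ Q}
  one_mem' := ⟨P.one_mem, Q.one_mem⟩
  mul_mem' := fun ha hb => ⟨P.mul_mem ha.1 hb.1, Q.mul_mem ha.2 hb.2⟩

/-- admissibility of the reflection of preordered groups onto preordered
abelian groups.  For a preordered group `(G, P)`, an abelian group `A` with submonoid `Q`,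
and a surjective homomorphism `φ : A →* G/[G,G]` with `φ(Q) = η_G(P)`, the pullback
group `P' = {(g,a) | η_G g = φ a}` has `[P',P'] = Ker(π₂) = {(c,1) | c ∈ [G,G]}`, and
`π₂` induces an isomorphism `P'/[P',P'] ≅ A` carrying the image of the cone `P'⁺`
onto `Q`. -/
theorem stmt3 {G A : Type*} [Group G] [CommGroup A]
    (P : Submonoid G) (hP : ∀ g : G, ∀ p ∈ P, g * p * g⁻¹ ∈ P)
    (Q : Submonoid A) (φ : A →* Abelianization G)
    (hφsurj : Function.Surjective φ)
    (hφQ : Submonoid.map φ Q = Submonoid.map (Abelianization.of (G := G)) P) :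
    commutator ↥(pullbackSubgroup (Abelianization.of (G := G)) φ) =
        ((MonoidHom.snd G A).comp
          (pullbackSubgroup (Abelianization.of (G := G)) φ).subtype).ker ∧
      (∀ x : ↥(pullbackSubgroup (Abelianization.of (G := G)) φ),
        x ∈ ((MonoidHom.snd G A).comp
            (pullbackSubgroup (Abelianization.of (G := G)) φ).subtype).ker ↔
          ((x : G × A).2 = 1 ∧ (x : G × A).1 ∈ commutator G)) ∧
      ∃ e : Abelianization ↥(pullbackSubgroup (Abelianization.of (G := G)) φ) ≃* A,
        (∀ x : ↥(pullbackSubgroup (Abelianization.of (G := G)) φ),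
          e (Abelianization.of x) = (x : G × A).2) ∧
        Submonoid.map e.toMonoidHom
            (Submonoid.map Abelianization.of
              (subCone (pullbackSubgroup (Abelianization.of (G := G)) φ) P Q)) = Q := by
  have hmem : ∀ x : G × A, x ∈ pullbackSubgroup (Abelianization.of (G := G)) φ ↔
      Abelianization.of x.1 = φ x.2 := fun x => Iff.rfl
  have hker : ∀ g : G, Abelianization.of g = 1 ↔ g ∈ commutator G := fun g =>
    QuotientGroup.eq_one_iff g
  generalize hS : pullbackSubgroup (Abelianization.of (G := G)) φ = S at *
  let p1 : S →* G := (MonoidHom.fst G A).comp S.subtype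
  let p2 : S →* A := (MonoidHom.snd G A).comp S.subtype
  have hp1 : Function.Surjective p1 := by
    intro g
    obtain ⟨a, ha⟩ := hφsurj (Abelianization.of g)
    exact ⟨⟨(g, a), (hmem _).2 ha.symm⟩, rfl⟩
  have hp2 : Function.Surjective p2 := by
    intro a
    obtain ⟨g, hg⟩ := QuotientGroup.mk_surjective (φ a)
    exact ⟨⟨(g, a), (hmem _).2 hg⟩, rfl⟩
  have hle : commutator S ≤ p2.ker := Abelianization.commutator_subset_ker p2
  have h2 : ∀ x : S, x ∈ p2.ker ↔ ((x : G × A).2 = 1 ∧ (x : G × A).1 ∈ commutator G) := by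
    intro x
    rw [MonoidHom.mem_ker]
    refine ⟨fun h => ?_, fun h => h.1⟩
    have h' : (x : G × A).2 = 1 := h
    refine ⟨h', (hker _).1 ?_⟩
    rw [(hmem _).1 x.2, h', map_one]
  have hmap : (commutator S).map p1 = commutator G := by
    rw [commutator_def, commutator_def, Subgroup.map_commutator,
      Subgroup.map_top_of_surjective p1 hp1]
  have h1 : commutator S = p2.ker := by
    refine le_antisymm hle fun x hx => ?_
    obtain ⟨hx2, hx1⟩ := (h2 x).1 hx
    rw [← hmap] at hx1
    obtain ⟨y, hy, hyx⟩ := hx1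
    have hy2 : (y : G × A).2 = 1 := hle hy
    have : y = x := Subtype.ext (Prod.ext hyx (hy2.trans hx2.symm))
    exact this ▸ hy
  refine ⟨h1, h2, MulEquiv.ofBijective (Abelianization.lift p2) ⟨?_, ?_⟩, ?_, ?_⟩
  · rw [injective_iff_map_eq_one]
    intro z hz
    obtain ⟨x, rfl⟩ := QuotientGroup.mk_surjective z
    have hx : x ∈ p2.ker := hz
    rw [← h1] at hx
    exact (QuotientGroup.eq_one_iff x).2 hx
  · intro a
    obtain ⟨x, hx⟩ := hp2 a
    exact ⟨Abelianization.of x, hx⟩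
  · intro x
    rfl
  · ext q
    constructor
    · rintro ⟨_, ⟨x, hx, rfl⟩, rfl⟩
      exact hx.2
    · intro hq
      have : φ q ∈ Submonoid.map φ Q := ⟨q, hq, rfl⟩
      rw [hφQ] at this
      obtain ⟨p, hp, hpq⟩ := this
      exact ⟨_, ⟨⟨(p, q), (hmem _).2 hpq⟩, ⟨hp, hq⟩, rfl⟩, rfl⟩
end

section
/- Let f : (G, P_G) → (H, P_H) and p : (E, P_E) → (H, P_H) be regular epimorphisms of preordered groups, and form their pullback: the group P = {(e,g) ∈ E × G : p(e) = f(g)} with positive cone P⁺ = {(e,g) : e ∈ P_E, g ∈ P_G, p(e) = f(g)}, and first projection π₁ : (P, P⁺) → (E, P_E). If Condition (⋆) holds for f, then Condition (⋆) holds for π₁. -/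
/-- Condition (⋆) for a morphism of preordered groups `f : (G, P) → (H, P_H)`:
for all `a, b, c ∈ P` with `a·b⁻¹ ∈ [G,G]` and `f b = f c`, one has `a·b⁻¹·c ∈ P`. -/
def StarCond {G H : Type*} [Group G] [Group H] (P : Submonoid G) (f : G →* H) : Prop :=
  ∀ a b c : G, a ∈ P → b ∈ P → c ∈ P → a * b⁻¹ ∈ commutator G → f b = f c →
    a * b⁻¹ * c ∈ P

/-- Condition (⋆) is stable under pullback: if `f : (G,P_G) → (H,P_H)` and
`p : (E,P_E) → (H,P_H)` are regular epimorphisms of preordered groups and Condition (⋆)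
holds for `f`, then it holds for the first projection `π₁` of their pullback. -/
theorem stmt4 {G H E : Type*} [Group G] [Group H] [Group E]
    (PG : Submonoid G) (hPG : ∀ g : G, ∀ x ∈ PG, g * x * g⁻¹ ∈ PG)
    (PH : Submonoid H) (hPH : ∀ h : H, ∀ x ∈ PH, h * x * h⁻¹ ∈ PH)
    (PE : Submonoid E) (hPE : ∀ e : E, ∀ x ∈ PE, e * x * e⁻¹ ∈ PE)
    (f : G →* H) (hfsurj : Function.Surjective f) (hfcone : Submonoid.map f PG = PH)
    (p : E →* H) (hpsurj : Function.Surjective p) (hpcone : Submonoid.map p PE = PH)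
    (hstar : StarCond PG f) :
    StarCond (subCone (pullbackSubgroup p f) PE PG)
      ((MonoidHom.fst E G).comp (pullbackSubgroup p f).subtype) := by
  intro a b c ha hb hc hab hbc
  have hbc1 : (b : E × G).1 = (c : E × G).1 := hbc
  refine ⟨?_, ?_⟩
  · change (a : E × G).1 * ((b : E × G).1)⁻¹ * (c : E × G).1 ∈ PE
    rw [← hbc1, inv_mul_cancel_right]
    exact ha.1
  · change (a : E × G).2 * ((b : E × G).2)⁻¹ * (c : E × G).2 ∈ PG
    refine hstar _ _ _ ha.2 hb.2 hc.2 ?_ ?_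
    · let q : pullbackSubgroup p f →* G :=
        (MonoidHom.snd E G).comp (pullbackSubgroup p f).subtype
      have hle : Subgroup.map q (commutator _) ≤ commutator G := by
        rw [commutator_def, commutator_def, Subgroup.map_commutator]
        exact Subgroup.commutator_mono le_top le_top
      exact hle (Subgroup.mem_map_of_mem q hab)
    · have h1 : p (b : E × G).1 = f (b : E × G).2 := b.2
      have h2 : p (c : E × G).1 = f (c : E × G).2 := c.2
      rw [← h1, ← h2, hbc1]
end

section
/- Let f : (G, P_G) → (H, P_H) be a regular epimorphism of preordered groups, and let π₁ : (Eq(f), Eq(f)⁺) → (G, P_G) denote the first projection of its kernel pair. Then Condition (⋆) holds for π₁ if and only if Condition (⋆) holds for f. -/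
/-- The kernel pair `Eq(f) = {(x,y) | f x = f y}` of `f : G →* H`. -/
def kerPair {G H : Type*} [Group G] [Group H] (f : G →* H) : Subgroup (G × G) :=
  pullbackSubgroup f f

/-- The positive cone `Eq(f)⁺` of the kernel pair of a morphism of preordered
groups `f : (G,P) → (H,P_H)`. -/
def kerPairCone {G H : Type*} [Group G] [Group H] (f : G →* H) (P : Submonoid G) :
    Submonoid ↥(kerPair f) :=
  subCone (kerPair f) P P

/-- The first projection `π₁ : Eq(f) →* G` of the kernel pair of `f`. -/
def kerPairFst {G H : Type*} [Group G] [Group H] (f : G →* H) : ↥(kerPair f) →* G :=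
  (MonoidHom.fst G G).comp (kerPair f).subtype

/-- for a regular epimorphism of preordered groups
`f : (G,P_G) → (H,P_H)`, Condition (⋆) holds for the first projection of the
kernel pair of `f` if and only if it holds for `f`. -/
theorem stmt5 {G H : Type*} [Group G] [Group H]
    (PG : Submonoid G) (hPG : ∀ g : G, ∀ x ∈ PG, g * x * g⁻¹ ∈ PG)
    (PH : Submonoid H) (hPH : ∀ h : H, ∀ x ∈ PH, h * x * h⁻¹ ∈ PH)
    (f : G →* H) (hfsurj : Function.Surjective f) (hfcone : Submonoid.map f PG = PH) :
    StarCond (kerPairCone f PG) (kerPairFst f) ↔ StarCond PG f := by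
  have key : ∀ {A B : Type _} [Group A] [Group B] (φ : A →* B) (x : A),
      x ∈ commutator A → φ x ∈ commutator B := by
    intro A B _ _ φ x hx
    have h1 : φ x ∈ (commutator A).map φ := Subgroup.mem_map_of_mem φ hx
    rw [commutator_def, Subgroup.map_commutator] at h1
    rw [commutator_def]
    exact Subgroup.commutator_mono le_top le_top h1
  constructor
  · intro h a b c ha hb hc hab hf
    let d : G →* ↥(kerPair f) :=
      { toFun := fun x => ⟨(x, x), rfl⟩
        map_one' := rfl
        map_mul' := fun _ _ => rfl }
    have hd := key d _ hab
    rw [map_mul, map_inv] at hd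
    exact (h (d a) (d b) ⟨(b, c), hf⟩ ⟨ha, ha⟩ ⟨hb, hb⟩ ⟨hb, hc⟩ hd rfl).2
  · intro h a b c ha hb hc hab hf
    have hbc : (b : G × G).1 = (c : G × G).1 := hf
    refine ⟨?_, ?_⟩
    · change (a : G × G).1 * ((b : G × G).1)⁻¹ * (c : G × G).1 ∈ PG
      rw [← hbc, inv_mul_cancel_right]
      exact ha.1
    · have h2 := key ((MonoidHom.snd G G).comp (kerPair f).subtype) _ hab
      have hb' : f (b : G × G).1 = f (b : G × G).2 := b.2
      have hc' : f (c : G × G).1 = f (c : G × G).2 := c.2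
      exact h _ _ _ ha.2 hb.2 hc.2 h2 (by rw [← hb', ← hc', hbc])
end

section
/- Let f : (G, P_G) → (H, P_H) be a regular epimorphism of preordered groups. The following are equivalent: (1) Ker(f) ⊆ Z(G) (the center of G) and Condition (⋆) holds for f; (2) f is a normal extension with respect to the reflection of preordered groups onto preordered abelian groups, explicitly: (a) the group homomorphism θ : Eq(f) → {(g,u) ∈ G × Ab(Eq(f)) : η_G(g) = Ab(π₁)(u)} defined by θ(x,y) = (x, η_{Eq(f)}(x,y)) is bijective, and (b) θ restricts to a bijection from Eq(f)⁺ onto {(g,u) : g ∈ P_G, u ∈ η_{Eq(f)}(Eq(f)⁺), η_G(g) = Ab(π₁)(u)}. -/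
/-- The comparison map `θ : Eq(f) →* G × Ab(Eq(f))`, `θ(x,y) = (x, η(x,y))`,
towards the pullback of `η_G` and `Ab(π₁)`. -/
def thetaMap {G H : Type*} [Group G] [Group H] (f : G →* H) :
    ↥(kerPair f) →* G × Abelianization ↥(kerPair f) :=
  (kerPairFst f).prod Abelianization.of

/-- The diagonal `G →* Eq(f)`. -/
def diagKP {G H : Type*} [Group G] [Group H] (f : G →* H) : G →* ↥(kerPair f) where
  toFun g := ⟨(g, g), rfl⟩
  map_one' := rfl
  map_mul' _ _ := rfl

theorem of_diagKP {G H : Type*} [Group G] [Group H] (f : G →* H) {c : G}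
    (hc : c ∈ commutator G) : (Abelianization.of (diagKP f c)) = 1 := by
  have h : Abelianization.of c = 1 := by
    rw [← MonoidHom.mem_ker, Abelianization.ker_of]; exact hc
  have := Abelianization.map_of (diagKP f) c
  rw [← this, h, map_one]

theorem comm_diag {G H : Type*} [Group G] [Group H] (f : G →* H)
    (hz : f.ker ≤ Subgroup.center G) (e : ↥(kerPair f)) (he : Abelianization.of e = 1) :
    e.1.1 = e.1.2 := by
  have he' : e ∈ commutator ↥(kerPair f) := by
    rw [← Abelianization.ker_of]; exact he
  have hle : commutator ↥(kerPair f) ≤ MonoidHom.eqLocus (kerPairFst f)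
      ((MonoidHom.snd G G).comp (kerPair f).subtype) := by
    rw [commutator_def, Subgroup.commutator_le]
    rintro ⟨⟨x, x'⟩, hx⟩ - ⟨⟨y, y'⟩, hy⟩ -
    change f x = f x' at hx
    change f y = f y' at hy
    change x * y * x⁻¹ * y⁻¹ = x' * y' * x'⁻¹ * y'⁻¹
    have hk : x⁻¹ * x' ∈ Subgroup.center G := hz (by simp [MonoidHom.mem_ker, hx])
    have hl : y⁻¹ * y' ∈ Subgroup.center G := hz (by simp [MonoidHom.mem_ker, hy])
    obtain ⟨k, rfl⟩ : ∃ k, x' = x * k := ⟨x⁻¹ * x', by group⟩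
    obtain ⟨l, rfl⟩ : ∃ l, y' = y * l := ⟨y⁻¹ * y', by group⟩
    rw [inv_mul_cancel_left, Subgroup.mem_center_iff] at hk hl
    symm
    calc x * k * (y * l) * (x * k)⁻¹ * (y * l)⁻¹
        = x * (k * (y * l)) * k⁻¹ * x⁻¹ * (l⁻¹ * y⁻¹) := by group
      _ = x * y * (l * x⁻¹) * l⁻¹ * y⁻¹ := by rw [← hk]; group
      _ = x * y * x⁻¹ * y⁻¹ := by rw [← hl]; group
  exact hle he'

theorem of_eq_iff_mem {G : Type*} [Group G] (a b : G) :
    Abelianization.of a = Abelianization.of b ↔ a * b⁻¹ ∈ commutator G := by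
  rw [← Abelianization.ker_of, MonoidHom.mem_ker, map_mul, map_inv, mul_inv_eq_one]

/-- a regular epimorphism `f : (G,P_G) → (H,P_H)` of preordered groups is a
normal extension for the reflection onto preordered abelian groups (expressed by the
comparison morphism `θ` towards the pullback of `η_G` along `Ab(π₁)` being an
isomorphism of preordered groups) if and only if `Ker f ⊆ Z(G)` and Condition (⋆)
holds for `f`. -/
theorem stmt7 {G H : Type*} [Group G] [Group H]
    (PG : Submonoid G) (hPG : ∀ g : G, ∀ x ∈ PG, g * x * g⁻¹ ∈ PG)
    (PH : Submonoid H) (hPH : ∀ h : H, ∀ x ∈ PH, h * x * h⁻¹ ∈ PH)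
    (f : G →* H) (hfsurj : Function.Surjective f) (hfcone : Submonoid.map f PG = PH) :
    (f.ker ≤ Subgroup.center G ∧ StarCond PG f) ↔
      (Function.Injective (thetaMap f) ∧
        Set.range (thetaMap f) =
          {z : G × Abelianization ↥(kerPair f) |
            Abelianization.of z.1 = Abelianization.map (kerPairFst f) z.2} ∧
        Set.BijOn (thetaMap f) (kerPairCone f PG : Set ↥(kerPair f))
          {z : G × Abelianization ↥(kerPair f) |
            z.1 ∈ PG ∧ z.2 ∈ Submonoid.map Abelianization.of (kerPairCone f PG) ∧
            Abelianization.of z.1 = Abelianization.map (kerPairFst f) z.2}) := by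
  constructor
  · rintro ⟨hz, hs⟩
    have hinj : Function.Injective (thetaMap f) := by
      rw [injective_iff_map_eq_one]
      intro e he
      have h1 : e.1.1 = 1 := congrArg Prod.fst he
      have h2 := comm_diag f hz e (congrArg Prod.snd he)
      exact Subtype.ext (Prod.ext h1 (h2.symm.trans h1))
    have key : ∀ (g : G) (e : ↥(kerPair f)), g * e.1.1⁻¹ ∈ commutator G →
        thetaMap f (diagKP f (g * e.1.1⁻¹) * e) = (g, Abelianization.of e) := by
      intro g e h
      refine Prod.ext ?_ ?_
      · exact inv_mul_cancel_right g e.1.1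
      · change Abelianization.of (diagKP f (g * e.1.1⁻¹) * e) = _
        rw [map_mul, of_diagKP f h, one_mul]
    have hmem : ∀ e, Abelianization.of (thetaMap f e).1 =
        Abelianization.map (kerPairFst f) (thetaMap f e).2 :=
      fun e => (Abelianization.map_of (kerPairFst f) e).symm
    refine ⟨hinj, ?_, ?_, hinj.injOn, ?_⟩
    · ext ⟨g, u⟩
      constructor
      · rintro ⟨e, he⟩
        rw [← he]
        exact hmem e
      · intro h
        obtain ⟨e, rfl⟩ := QuotientGroup.mk_surjective u
        exact ⟨_, key g e ((of_eq_iff_mem _ _).1 (h.trans (Abelianization.map_of (kerPairFst f) e)))⟩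
    · intro e he
      exact ⟨he.1, ⟨e, he, rfl⟩, hmem e⟩
    · rintro ⟨g, u⟩ ⟨hg, ⟨e, he, rfl⟩, h⟩
      have hc := (of_eq_iff_mem _ _).1 (h.trans (Abelianization.map_of (kerPairFst f) e))
      refine ⟨_, ⟨?_, ?_⟩, key g e hc⟩
      · change g * e.1.1⁻¹ * e.1.1 ∈ PG
        rw [inv_mul_cancel_right]
        exact hg
      · exact hs g e.1.1 e.1.2 hg he.1 he.2 hc e.2
  · rintro ⟨hinj, -, -, -, hsurj⟩
    constructor
    · intro k hk
      rw [Subgroup.mem_center_iff]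
      intro g
      have hk' : f k = 1 := hk
      let p : ↥(kerPair f) := ⟨(1, k), by change f 1 = f k; rw [hk', map_one]⟩
      have : diagKP f g * p = p * diagKP f g := by
        apply hinj
        refine Prod.ext ?_ ?_
        · change g * 1 = 1 * g
          simp
        · change Abelianization.of (diagKP f g * p) = Abelianization.of (p * diagKP f g)
          rw [map_mul, map_mul, mul_comm]
      exact congrArg (fun e : ↥(kerPair f) => e.1.2) this
    · intro a b c ha hb hc hab hf
      let e : ↥(kerPair f) := ⟨(b, c), hf⟩
      obtain ⟨y, hy, hye⟩ := hsurj (a := (a, Abelianization.of e))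
        ⟨ha, ⟨e, ⟨hb, hc⟩, rfl⟩,
          ((of_eq_iff_mem a b).2 hab).trans (Abelianization.map_of (kerPairFst f) e).symm⟩
      have : y = diagKP f (a * b⁻¹) * e := by
        apply hinj
        rw [hye]
        refine Prod.ext ?_ ?_
        · exact (inv_mul_cancel_right a b).symm
        · change _ = Abelianization.of (diagKP f (a * b⁻¹) * e)
          rw [map_mul, of_diagKP f hab, one_mul]
      rw [this] at hy
      exact hy.2
end

section
/- A preordered group (G, P_G) is a commutative object: there exists a group homomorphism φ : G × G → G satisfying φ(x,1) = x and φ(1,y) = y for all x, y ∈ G and φ(P_G × P_G) ⊆ P_G, if and only if the group G is commutative. (Thus the commutative objects of the category of preordered groups are exactly the preordered abelian groups.) -/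
/-- a preordered group `(G, P)` is a commutative object (there is a
morphism of preordered groups `φ : (G,P) × (G,P) → (G,P)` with `φ·l_G = 1` and
`φ·r_G = 1`) if and only if the group `G` is commutative. -/
theorem stmt8 {G : Type*} [Group G]
    (P : Submonoid G) (hP : ∀ g : G, ∀ p ∈ P, g * p * g⁻¹ ∈ P) :
    (∃ φ : G × G →* G, (∀ x : G, φ (x, 1) = x) ∧ (∀ y : G, φ (1, y) = y) ∧
        ∀ p ∈ P, ∀ q ∈ P, φ (p, q) ∈ P) ↔
      ∀ x y : G, x * y = y * x := by
  constructor
  · rintro ⟨φ, h1, h2, -⟩ x y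
    have a : φ ((x, 1) * (1, y)) = x * y := by rw [map_mul, h1, h2]
    have b : φ ((1, y) * (x, 1)) = y * x := by rw [map_mul, h1, h2]
    rw [← a, ← b]
    simp
  · intro h
    refine ⟨{ toFun := fun z => z.1 * z.2, map_one' := by simp, map_mul' := ?_ }, ?_, ?_, ?_⟩
    · rintro ⟨a, b⟩ ⟨c, d⟩
      change a * c * (b * d) = a * b * (c * d)
      rw [mul_assoc, mul_assoc, ← mul_assoc c, h c b, mul_assoc]
    · intro x
      exact mul_one x
    · intro y
      exact one_mul y
    · intro p hp q hq
      exact P.mul_mem hp hq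
end

section
/- A preordered group (G, P_G) is an abelian object: there exists a group homomorphism φ : G × G → G satisfying φ(1,x) = x and φ(x,x) = 1 for all x ∈ G and φ(P_G × P_G) ⊆ P_G, if and only if the group G is commutative and the positive cone P_G is a subgroup of G (i.e. P_G is closed under inverses). (Thus the abelian objects of the category of preordered groups are exactly the monomorphisms of abelian groups.) -/
/-- a preordered group `(G, P)` is an abelian object (there is a
morphism of preordered groups `φ : (G,P) × (G,P) → (G,P)` with `φ·r_G = 1` and
`φ·Δ_G = 0`) if and only if the group `G` is commutative and the positive cone
`P` is a subgroup of `G`. -/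
theorem stmt9 {G : Type*} [Group G]
    (P : Submonoid G) (hP : ∀ g : G, ∀ p ∈ P, g * p * g⁻¹ ∈ P) :
    (∃ φ : G × G →* G, (∀ x : G, φ (1, x) = x) ∧ (∀ x : G, φ (x, x) = 1) ∧
        ∀ p ∈ P, ∀ q ∈ P, φ (p, q) ∈ P) ↔
      ((∀ x y : G, x * y = y * x) ∧ ∀ p ∈ P, p⁻¹ ∈ P) := by
  constructor
  · rintro ⟨φ, h1, h2, h3⟩
    have h4 : ∀ x : G, φ (x, 1) = x⁻¹ := by
      intro x
      have h : φ ((x, 1) * (1, x)) = 1 := by simpa using h2 x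
      rw [map_mul, h1] at h
      exact eq_inv_of_mul_eq_one_left h
    refine ⟨fun x y => ?_, fun p hp => ?_⟩
    · have h : φ ((x⁻¹, 1) * (1, y)) = φ ((1, y) * (x⁻¹, 1)) := by simp
      rw [map_mul, map_mul, h1, h4, inv_inv] at h
      exact h
    · rw [← h4]
      exact h3 p hp 1 P.one_mem
  · rintro ⟨hc, hi⟩
    refine ⟨MonoidHom.mk' (fun z => z.1⁻¹ * z.2) ?_, ?_, ?_, ?_⟩
    · rintro ⟨a, b⟩ ⟨c, d⟩
      change (a * c)⁻¹ * (b * d) = (a⁻¹ * b) * (c⁻¹ * d)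
      rw [hc a c, mul_inv_rev, mul_assoc, mul_assoc, ← mul_assoc c⁻¹ b d, hc c⁻¹ b, mul_assoc]
    · intro x
      simp
    · intro x
      simp
    · intro p hp q hq
      exact P.mul_mem (hi p hp) hq
end

section
/- Let f : (G, P_G) → (H, P_H) be a regular epimorphism of preordered groups, let Eq(f)⁺ = {(x,y) ∈ P_G × P_G : f(x) = f(y)} be the positive cone of the kernel pair, with first projection π₁ : Eq(f)⁺ → P_G, diagonal section Δ(x) = (x,x), and K = {(1,k) : k ∈ P_G, f(k) = 1} the kernel of π₁. The following are equivalent: (a) the restriction of f to the positive cones is a special homogeneous surjection of monoids, i.e. for every x ∈ P_G both maps K → π₁⁻¹(x) given by (1,k) ↦ (1,k)·Δ(x) = (x, k·x) and (1,k) ↦ Δ(x)·(1,k) = (x, x·k) are bijective; (b) for all x, y ∈ P_G with f(x) = f(y), one has y·x⁻¹ ∈ P_G and x⁻¹·y ∈ P_G. -/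
/-- for a regular epimorphism of preordered groups
`f : (G,P_G) → (H,P_H)`, the restriction of `f` to the positive cones is a special
homogeneous surjection of monoids (for every `x ∈ P_G` the two translation maps from
the kernel `K = {(1,k) | k ∈ P_G, f k = 1}` of `π₁ : Eq(f)⁺ → P_G` to the fiber
`π₁⁻¹(x)` are bijective) if and only if for all `x, y ∈ P_G` with `f x = f y`
one has `y·x⁻¹ ∈ P_G` and `x⁻¹·y ∈ P_G`. -/
theorem stmt12 {G H : Type*} [Group G] [Group H]
    (PG : Submonoid G) (hPG : ∀ g : G, ∀ x ∈ PG, g * x * g⁻¹ ∈ PG)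
    (PH : Submonoid H) (hPH : ∀ h : H, ∀ x ∈ PH, h * x * h⁻¹ ∈ PH)
    (f : G →* H) (hfsurj : Function.Surjective f) (hfcone : Submonoid.map f PG = PH) :
    (∀ x ∈ PG,
        Set.BijOn (fun z : G × G => z * (x, x))
          {z : G × G | z.1 = 1 ∧ z.2 ∈ PG ∧ f z.2 = 1}
          {z : G × G | z.1 = x ∧ z.2 ∈ PG ∧ f z.2 = f x} ∧
        Set.BijOn (fun z : G × G => (x, x) * z)
          {z : G × G | z.1 = 1 ∧ z.2 ∈ PG ∧ f z.2 = 1}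
          {z : G × G | z.1 = x ∧ z.2 ∈ PG ∧ f z.2 = f x}) ↔
      ∀ x ∈ PG, ∀ y ∈ PG, f x = f y → y * x⁻¹ ∈ PG ∧ x⁻¹ * y ∈ PG := by
  constructor
  · intro h x hx y hy hxy
    obtain ⟨h1, h2⟩ := h x hx
    constructor
    · obtain ⟨⟨a, b⟩, ⟨ha, hb, hfb⟩, e⟩ := h1.surjOn (show (x, y) ∈ _ from ⟨rfl, hy, hxy.symm⟩)
      have e2 : b * x = y := congrArg Prod.snd e
      rw [← e2, mul_inv_cancel_right]
      exact hb
    · obtain ⟨⟨a, b⟩, ⟨ha, hb, hfb⟩, e⟩ := h2.surjOn (show (x, y) ∈ _ from ⟨rfl, hy, hxy.symm⟩)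
      have e2 : x * b = y := congrArg Prod.snd e
      rw [← e2, inv_mul_cancel_left]
      exact hb
  · intro h x hx
    refine ⟨⟨?_, ?_, ?_⟩, ⟨?_, ?_, ?_⟩⟩
    · rintro ⟨a, b⟩ ⟨ha, hb, hfb⟩
      dsimp only at ha hb hfb
      exact ⟨by simp [ha], PG.mul_mem hb hx, by simp [hfb]⟩
    · exact (mul_left_injective (x, x)).injOn
    · rintro ⟨a, b⟩ ⟨ha, hb, hfb⟩
      dsimp only at ha hb hfb
      exact ⟨(1, b * x⁻¹), ⟨rfl, (h x hx b hb hfb.symm).1, by simp [hfb]⟩, by simp [ha]⟩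
    · rintro ⟨a, b⟩ ⟨ha, hb, hfb⟩
      dsimp only at ha hb hfb
      exact ⟨by simp [ha], PG.mul_mem hx hb, by simp [hfb]⟩
    · exact (mul_right_injective (x, x)).injOn
    · rintro ⟨a, b⟩ ⟨ha, hb, hfb⟩
      dsimp only at ha hb hfb
      exact ⟨(1, x⁻¹ * b), ⟨rfl, (h x hx b hb hfb.symm).2, by simp [hfb]⟩, by simp [ha]⟩
end

section
/- Let f : (G, P_G) → (H, P_H) be a regular epimorphism of preordered groups. Define D_G = {η_G(a)·η_G(b)⁻¹ : a, b ∈ P_G} ⊆ Ab(G) and D_{Eq(f)} = {η_{Eq(f)}(p)·η_{Eq(f)}(q)⁻¹ : p, q ∈ Eq(f)⁺} ⊆ Ab(Eq(f)). The following are equivalent: (1) Ker(f) ⊆ Z(G) (the center of G) and for all x, y ∈ P_G with f(x) = f(y) one has y·x⁻¹ ∈ P_G and x⁻¹·y ∈ P_G; (2) f is a normal (equivalently, central) extension with respect to the reflection of preordered groups onto the category of monomorphisms of abelian groups, explicitly: (a) the group homomorphism θ : Eq(f) → {(g,u) ∈ G × Ab(Eq(f)) : η_G(g) = Ab(π₁)(u)}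 defined by θ(x,y) = (x, η_{Eq(f)}(x,y)) is bijective, and (b) θ restricts to a bijection from Eq(f)⁺ onto {(g,u) : g ∈ P_G, u ∈ D_{Eq(f)}, η_G(g) = Ab(π₁)(u)}. -/
/-- The subgroup of differences `D_K = {η(p)·η(q)⁻¹ : p, q ∈ cone}` of the
abelianization, realized here as a subset. -/
def diffSet {K : Type*} [Group K] (C : Submonoid K) : Set (Abelianization K) :=
  {u | ∃ p ∈ C, ∃ q ∈ C, u = Abelianization.of p * (Abelianization.of q)⁻¹}

theorem mem_kerPair_iff' {G H : Type*} [Group G] [Group H] (f : G →* H) (z : G × G) :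
    z ∈ kerPair f ↔ f z.1 = f z.2 := Iff.rfl

/-- The diagonal `G →* Eq(f)`. -/
def kpDiag {G H : Type*} [Group G] [Group H] (f : G →* H) : G →* ↥(kerPair f) where
  toFun g := ⟨(g, g), rfl⟩
  map_one' := rfl
  map_mul' _ _ := rfl

instance kpCenterCommGroup {G : Type*} [Group G] : CommGroup ↥(Subgroup.center G) :=
  { (Subgroup.center G).toGroup with
    mul_comm := fun a b => Subtype.ext (b.2.comm a).symm }

/-- The map `(x,y) ↦ x⁻¹ y`, with values in the center when the kernel is central. -/
def kpDelta {G H : Type*} [Group G] [Group H] (f : G →* H)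
    (hc : f.ker ≤ Subgroup.center G) : ↥(kerPair f) →* ↥(Subgroup.center G) where
  toFun z := ⟨z.1.1⁻¹ * z.1.2, hc (by
    have h : f z.1.1 = f z.1.2 := z.2
    rw [MonoidHom.mem_ker, map_mul, map_inv, h, inv_mul_cancel])⟩
  map_one' := by
    apply Subtype.ext
    simp
  map_mul' := by
    rintro ⟨⟨x, y⟩, h⟩ ⟨⟨x', y'⟩, h'⟩
    apply Subtype.ext
    have h1 : f x = f y := h
    have hz : x⁻¹ * y ∈ Subgroup.center G := hc (by
      rw [MonoidHom.mem_ker, map_mul, map_inv, h1, inv_mul_cancel])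
    have := Subgroup.mem_center_iff.1 hz x'⁻¹
    change (x * x')⁻¹ * (y * y') = x⁻¹ * y * (x'⁻¹ * y')
    rw [← mul_assoc (x⁻¹ * y), ← this]
    group

theorem kpDelta_eq {G H : Type*} [Group G] [Group H] (f : G →* H)
    (hc : f.ker ≤ Subgroup.center G) (z : ↥(kerPair f)) :
    ((Abelianization.lift (kpDelta f hc) (Abelianization.of z) : ↥(Subgroup.center G)) : G) = z.1.1⁻¹ * z.1.2 := by
  rw [Abelianization.lift_apply_of]
  rfl

theorem thetaMap_eq {G H : Type*} [Group G] [Group H] (f : G →* H) (z : ↥(kerPair f)) :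
    thetaMap f z = (z.1.1, Abelianization.of z) := rfl

theorem kp_range {G H : Type*} [Group G] [Group H] (f : G →* H) :
    Set.range (thetaMap f) =
          {z : G × Abelianization ↥(kerPair f) |
            Abelianization.of z.1 = Abelianization.map (kerPairFst f) z.2} := by
  ext ⟨g, u⟩
  constructor
  · rintro ⟨z, hz⟩
    rw [← hz]
    change _ = Abelianization.map (kerPairFst f) (Abelianization.of z)
    rw [Abelianization.map_of]
    rfl
  · intro h
    obtain ⟨z, rfl⟩ := QuotientGroup.mk_surjective u
    change Abelianization.of g = Abelianization.map (kerPairFst f) (Abelianization.of z) at h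
    rw [Abelianization.map_of] at h
    have h1 : Abelianization.of (g * (kerPairFst f z)⁻¹) = 1 := by
      rw [map_mul, map_inv, h, mul_inv_cancel]
    have h2 : Abelianization.of (kpDiag f (g * (kerPairFst f z)⁻¹)) = 1 := by
      rw [← Abelianization.map_of, h1, map_one]
    refine ⟨kpDiag f (g * (kerPairFst f z)⁻¹) * z, ?_⟩
    refine Prod.ext ?_ ?_
    swap
    · change Abelianization.of (kpDiag f (g * (kerPairFst f z)⁻¹) * z) = Abelianization.of z
      rw [map_mul Abelianization.of, h2, one_mul]
    exact inv_mul_cancel_right g z.1.1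

/-- a regular epimorphism `f : (G,P_G) → (H,P_H)` of preordered groups
is a normal (equivalently central) extension for the reflection onto monomorphisms of
abelian groups if and only if `Ker f ⊆ Z(G)` and the restriction of `f` to the cones
is a special homogeneous surjection (`f x = f y` with `x, y ∈ P_G` implies
`y·x⁻¹ ∈ P_G` and `x⁻¹·y ∈ P_G`). -/
theorem stmt13 {G H : Type*} [Group G] [Group H]
    (PG : Submonoid G) (hPG : ∀ g : G, ∀ x ∈ PG, g * x * g⁻¹ ∈ PG)
    (PH : Submonoid H) (hPH : ∀ h : H, ∀ x ∈ PH, h * x * h⁻¹ ∈ PH)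
    (f : G →* H) (hfsurj : Function.Surjective f) (hfcone : Submonoid.map f PG = PH) :
    (f.ker ≤ Subgroup.center G ∧
        ∀ x ∈ PG, ∀ y ∈ PG, f x = f y → y * x⁻¹ ∈ PG ∧ x⁻¹ * y ∈ PG) ↔
      (Function.Injective (thetaMap f) ∧
        Set.range (thetaMap f) =
          {z : G × Abelianization ↥(kerPair f) |
            Abelianization.of z.1 = Abelianization.map (kerPairFst f) z.2} ∧
        Set.BijOn (thetaMap f) (kerPairCone f PG : Set ↥(kerPair f))
          {z : G × Abelianization ↥(kerPair f) |
            z.1 ∈ PG ∧ z.2 ∈ diffSet (kerPairCone f PG) ∧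
            Abelianization.of z.1 = Abelianization.map (kerPairFst f) z.2}) := by
  constructor
  · rintro ⟨hc, hs⟩
    have hinj : Function.Injective (thetaMap f) := by
      intro a b hab
      rw [thetaMap_eq, thetaMap_eq, Prod.mk.injEq] at hab
      obtain ⟨h1, h2⟩ := hab
      have h3 := kpDelta_eq f hc a
      rw [h2, kpDelta_eq, h1] at h3
      exact Subtype.ext (Prod.ext h1 (mul_left_cancel h3).symm)
    refine ⟨hinj, kp_range f, ?_, hinj.injOn, ?_⟩
    · intro z hz
      refine ⟨hz.1, ⟨z, hz, 1, one_mem _, ?_⟩, ?_⟩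
      · rw [map_one, inv_one, mul_one]
        rfl
      · have : thetaMap f z ∈ Set.range (thetaMap f) := ⟨z, rfl⟩
        rw [kp_range] at this
        exact this
    · rintro ⟨g, u⟩ ⟨hg, ⟨p, hp, q, hq, hu⟩, h⟩
      have hr : (g, u) ∈ Set.range (thetaMap f) := by
        rw [kp_range]
        exact h
      obtain ⟨z, hz⟩ := hr
      refine ⟨z, ?_, hz⟩
      rw [thetaMap_eq, Prod.mk.injEq] at hz
      obtain ⟨h1, h2⟩ := hz
      have hg' : z.1.1 ∈ PG := by
        rw [h1]
        exact hg
      refine ⟨hg', ?_⟩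
      have h3 := kpDelta_eq f hc z
      dsimp only at hu
      rw [h2, hu, map_mul, map_inv, Subgroup.coe_mul, Subgroup.coe_inv, kpDelta_eq,
        kpDelta_eq] at h3
      have hpp := (hs _ hp.1 _ hp.2 p.2).2
      have hqq := (hs _ hq.2 _ hq.1 (Eq.symm q.2)).2
      have h4 : z.1.2 = z.1.1 * ((p.1.1⁻¹ * p.1.2) * (q.1.2⁻¹ * q.1.1)) := by
        rw [mul_inv_rev, inv_inv] at h3
        rw [h3, mul_inv_cancel_left]
      rw [h4]
      exact mul_mem hg' (mul_mem hpp hqq)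
  · rintro ⟨hinj, -, hb⟩
    refine ⟨?_, ?_⟩
    · intro k hk
      rw [Subgroup.mem_center_iff]
      intro g
      have hk' : f 1 = f k := by
        rw [map_one]
        exact hk.symm
      let a : ↥(kerPair f) := ⟨(1, k), hk'⟩
      have h : kpDiag f g * a = a * kpDiag f g := by
        apply hinj
        rw [thetaMap_eq, thetaMap_eq, map_mul, map_mul, mul_comm]
        refine Prod.ext ?_ rfl
        change g * 1 = 1 * g
        rw [mul_one, one_mul]
      exact congrArg (fun z : ↥(kerPair f) => z.1.2) h
    · intro x hx y hy hxy
      have key : y * x⁻¹ ∈ PG := by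
        let p : ↥(kerPair f) := ⟨(x, y), hxy⟩
        let w : ↥(kerPair f) := p * (kpDiag f x)⁻¹
        have hw1 : w.1.1 = 1 := mul_inv_cancel x
        have hw : thetaMap f w ∈ {z : G × Abelianization ↥(kerPair f) |
            z.1 ∈ PG ∧ z.2 ∈ diffSet (kerPairCone f PG) ∧
            Abelianization.of z.1 = Abelianization.map (kerPairFst f) z.2} := by
          refine ⟨?_, ⟨p, ⟨hx, hy⟩, kpDiag f x, ⟨hx, hx⟩, ?_⟩, ?_⟩
          · rw [thetaMap_eq, hw1]
            exact one_mem _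
          · rw [thetaMap_eq, ← map_inv, ← map_mul]
          · have : thetaMap f w ∈ Set.range (thetaMap f) := ⟨w, rfl⟩
            rw [kp_range] at this
            exact this
        obtain ⟨z, hz, hzw⟩ := hb.surjOn hw
        have hzw' := hinj hzw
        rw [hzw'] at hz
        exact hz.2
      refine ⟨key, ?_⟩
      have := hPG x⁻¹ _ key
      simpa [mul_assoc] using this
end

section
/- Let (G, P_G) be a preordered group, A an abelian group, Q ⊆ A a subgroup, and f : G → A a group homomorphism with f(P_G) ⊆ Q. Then there exists a unique group homomorphism g : G/[G,G] → A with g ∘ η_G = f, and this g moreover maps the subgroup D_G = {η_G(a)·η_G(b)⁻¹ : a, b ∈ P_G} of G/[G,G] into Q. (Thus (G/[G,G], D_G) is the reflection of (G, P_G) into the category of monomorphisms of abelian groups, i.e. into the abelian objects of preordered groups.) -/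
/-- the reflection of a preordered group `(G, P)` into the category of
monomorphisms of abelian groups (the abelian objects of preordered groups): a morphism
`f` to an abelian group `A` carrying `P` into a subgroup `Q ≤ A` factors uniquely
through `η_G : G → G/[G,G]`, and the factorization carries the subgroup of differences
`D_G = {η_G(a)·η_G(b)⁻¹ : a, b ∈ P}` into `Q`. -/
theorem stmt14 {G A : Type*} [Group G] [CommGroup A]
    (P : Submonoid G) (hP : ∀ g : G, ∀ p ∈ P, g * p * g⁻¹ ∈ P)
    (Q : Subgroup A) (f : G →* A) (hf : ∀ p ∈ P, f p ∈ Q) :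
    (∃! g : Abelianization G →* A, g.comp Abelianization.of = f) ∧
      ∀ g : Abelianization G →* A, g.comp Abelianization.of = f →
        ∀ a ∈ P, ∀ b ∈ P,
          g (Abelianization.of a * (Abelianization.of b)⁻¹) ∈ Q := by
  refine ⟨⟨Abelianization.lift f, ?_, ?_⟩, ?_⟩
  · ext x
    simp
  · intro g hg
    apply Abelianization.hom_ext
    rw [hg]
    ext x
    simp
  · intro g hg a ha b hb
    have h : ∀ x, g (Abelianization.of x) = f x := fun x => DFunLike.congr_fun hg x
    rw [map_mul, map_inv, h, h]
    exact Q.mul_mem (hf a ha) (Q.inv_mem (hf b hb))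
end
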